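/- Let m, λ, c_V, k₀, k₁ > 0, β ∈ [0, 2) with β ≠ 1, and set k(t) = k₀ + k₁·t^β, Q(t) = (c_V/2)·t², Λ(t) = c_V·t, G₁(t) = k₀/t − k₁·t^(β−1)/(β−1), G₂(t) = k₀/(2t²) + k₁·t^(β−2)/(2−β). Let E be a finite-dimensional real inner product space and let θ, χ : ℝ × E → ℝ be twice continuously differentiable with θ(t, x) > 0 for all (t, x). Then at every point (t, x), with Δ and ∇ acting in the space variable x and ∂ₜ the time derivative: (1/θ)·[ ∂ₜ(Q ∘ θ) + m·θ·Δχ·(χ + λ) + Δ(G₁ ∘ θ) ] = ∂ₜ(Λ ∘ θ) + m·Δ( χ²/2 + λχ ) + Δ(G₂ ∘ θ) − m·‖∇χ‖² − k(θ)·‖∇(θ⁻¹)‖². In particular, if θ, χ satisfy the heat equation ∂ₜ(Q ∘ θ) + m·θ·Δχ·(χ + λ) + Δ(G₁ ∘ θ) = 0 everywhere, then they satisfy the entropy equation ∂ₜ(Λ ∘ θ) + m·Δ(χ²/2 + λχ) + Δ(G₂ ∘ θ) = m·‖∇χ‖² + k(θ)·‖∇(θ⁻¹)‖² everywhere. -/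

import Mathlib

/-!
Everything follows from the chain rule `Δ(g ∘ f) = g'(f) Δf + g''(f) ‖∇f‖²`.
For `g(s) = s²/2 + λs` it gives `Δ(χ²/2 + λχ) = (χ + λ) Δχ + ‖∇χ‖²`. The potentials satisfy
`G₁'(s) = -k(s)/s²` and `G₂'(s) = G₁'(s)/s`, hence `G₂'' = G₁''/s - G₁'/s²`: the terms with `G₁''`
cancel in `Δ(G₂ ∘ θ) - Δ(G₁ ∘ θ)/θ`, which leaves `k(θ) ‖∇θ‖²/θ⁴ = k(θ) ‖∇(θ⁻¹)‖²`. In time,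
`Q'(s) = s Λ'(s)` gives `∂ₜ(Q ∘ θ) = θ ∂ₜ(Λ ∘ θ)`.
-/

/-- The Laplacian of a real-valued function on a finite-dimensional real inner
product space: the trace of the second derivative, computed in an orthonormal basis. -/
noncomputable def lap {E : Type*} [NormedAddCommGroup E] [InnerProductSpace ℝ E]
    [FiniteDimensional ℝ E] (f : E → ℝ) (x : E) : ℝ :=
  ∑ i, fderiv ℝ (fderiv ℝ f) x (stdOrthonormalBasis ℝ E i) (stdOrthonormalBasis ℝ E i)

open Filter Topology

section ChainRule

lemma fderiv_fderiv_comp_apply {𝕜 V : Type*} [NontriviallyNormedField 𝕜]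
    [NormedAddCommGroup V] [NormedSpace 𝕜 V] {f : V → 𝕜} {g g' : 𝕜 → 𝕜} {g'' : 𝕜} {x : V}
    (hf : ContDiffAt 𝕜 2 f x) (hg : ∀ᶠ s in 𝓝 (f x), HasDerivAt g (g' s) s)
    (hg' : HasDerivAt g' g'' (f x)) (v w : V) :
    fderiv 𝕜 (fderiv 𝕜 fun y => g (f y)) x v w =
      g' (f x) * fderiv 𝕜 (fderiv 𝕜 f) x v w + g'' * (fderiv 𝕜 f x v * fderiv 𝕜 f x w) := by
  have hfx : HasFDerivAt f (fderiv 𝕜 f x) x := (hf.differentiableAt two_ne_zero).hasFDerivAt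
  have fderiv_comp : (fderiv 𝕜 fun y => g (f y)) =ᶠ[𝓝 x] fun y => g' (f y) • fderiv 𝕜 f y := by
    filter_upwards [hf.eventually (by simp), hf.continuousAt.eventually hg] with y hfy hgy
    exact (hgy.comp_hasFDerivAt y (hfy.differentiableAt two_ne_zero).hasFDerivAt).fderiv
  have fderiv_differentiable : DifferentiableAt 𝕜 (fderiv 𝕜 f) x :=
    (hf.fderiv_right (m := 1) (by norm_num)).differentiableAt one_ne_zero
  have product_rule :=
    ((hg'.comp_hasFDerivAt x hfx).fun_smul fderiv_differentiable.hasFDerivAt).fderiv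
  rw [fderiv_comp.fderiv_eq]
  refine (congrArg (fun L => L v w) product_rule).trans ?_
  simp [mul_assoc]

lemma gradient_comp {F : Type*} [NormedAddCommGroup F] [InnerProductSpace ℝ F] [CompleteSpace F]
    {f : F → ℝ} {g : ℝ → ℝ} {g' : ℝ} {x : F} (hf : DifferentiableAt ℝ f x)
    (hg : HasDerivAt g g' (f x)) :
    gradient (fun y => g (f y)) x = g' • gradient f x := by
  have fderiv_comp : fderiv ℝ (fun y => g (f y)) x = g' • fderiv ℝ f x :=
    (hg.comp_hasFDerivAt x hf.hasFDerivAt).fderiv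
  rw [gradient, fderiv_comp, map_smul, gradient]

lemma deriv_comp_eq_mul_deriv_comp {𝕜 : Type*} [NontriviallyNormedField 𝕜] {u g h : 𝕜 → 𝕜}
    {c g' t : 𝕜} (hu : DifferentiableAt 𝕜 u t) (hg : HasDerivAt g g' (u t))
    (hh : HasDerivAt h (c * g') (u t)) :
    deriv (fun s => h (u s)) t = c * deriv (fun s => g (u s)) t := by
  have deriv_g : deriv (fun s => g (u s)) t = g' * deriv u t := (hg.comp t hu.hasDerivAt).deriv
  have deriv_h : deriv (fun s => h (u s)) t = c * g' * deriv u t := (hh.comp t hu.hasDerivAt).deriv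
  rw [deriv_g, deriv_h, mul_assoc]

end ChainRule

section Laplacian

variable {E : Type*} [NormedAddCommGroup E] [InnerProductSpace ℝ E] [FiniteDimensional ℝ E]
  {f : E → ℝ} {x : E}

lemma lap_comp {g g' : ℝ → ℝ} {g'' : ℝ} (hf : ContDiffAt ℝ 2 f x)
    (hg : ∀ᶠ s in 𝓝 (f x), HasDerivAt g (g' s) s) (hg' : HasDerivAt g' g'' (f x)) :
    lap (fun y => g (f y)) x = g' (f x) * lap f x + g'' * ‖gradient f x‖ ^ 2 := by
  simp only [lap, fderiv_fderiv_comp_apply hf hg hg', ← inner_gradient_left, ← sq,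
    Finset.sum_add_distrib, ← Finset.mul_sum, OrthonormalBasis.sum_sq_inner_left]

lemma lap_sq_div_two_add_const_mul (hf : ContDiffAt ℝ 2 f x) (c : ℝ) :
    lap (fun y => f y ^ 2 / 2 + c * f y) x = (f x + c) * lap f x + ‖gradient f x‖ ^ 2 := by
  have hasDerivAt_quadratic (s : ℝ) : HasDerivAt (fun s => s ^ 2 / 2 + c * s) (s + c) s := by
    simpa using ((hasDerivAt_pow 2 s).div_const 2).fun_add (hasDerivAt_const_mul c)
  simpa using lap_comp (g := fun s => s ^ 2 / 2 + c * s) hf (.of_forall hasDerivAt_quadratic)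
    ((hasDerivAt_id (f x)).add_const c)

/-- With `u = f⁻¹`, this is `div((k/f) ∇u) = (1/f) div(k ∇u) + k ‖∇u‖²`. -/
lemma lap_entropy_potential_comp {k G₁ G₂ : ℝ → ℝ} (hf : ContDiffAt ℝ 2 f x) (hfx : f x ≠ 0)
    (hk : DifferentiableAt ℝ k (f x))
    (hG₁ : ∀ᶠ s in 𝓝 (f x), HasDerivAt G₁ (-k s / s ^ 2) s)
    (hG₂ : ∀ᶠ s in 𝓝 (f x), HasDerivAt G₂ (-k s / s ^ 3) s) :
    lap (fun y => G₂ (f y)) x =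
      lap (fun y => G₁ (f y)) x / f x + k (f x) * ‖gradient (fun y => (f y)⁻¹) x‖ ^ 2 := by
  have hasDerivAt_neg_div_pow (n : ℕ) : HasDerivAt (fun s => -k s / s ^ n) _ (f x) :=
    hk.hasDerivAt.fun_neg.fun_div (hasDerivAt_pow n (f x)) (pow_ne_zero n hfx)
  rw [lap_comp hf hG₁ (hasDerivAt_neg_div_pow 2), lap_comp hf hG₂ (hasDerivAt_neg_div_pow 3),
    gradient_comp (hf.differentiableAt two_ne_zero) (hasDerivAt_inv hfx), norm_smul, mul_pow,
    Real.norm_eq_abs, sq_abs]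
  field_simp
  ring

end Laplacian

section PowerLaw

/-- The power-law heat conductivity `k(t) = k₀ + k₁ t^β`. -/
noncomputable def powerLawConductivity (k₀ k₁ β t : ℝ) : ℝ :=
  k₀ + k₁ * t ^ β

/-- A primitive of `-k(t) / t ^ (n + 1)` for the power-law conductivity `k`, when `n ≠ 0` and
`β ≠ n`. The potentials `G₁` and `G₂` of the heat and entropy fluxes are the cases `n = 1`
and `n = 2`. -/
noncomputable def fluxPotential (k₀ k₁ β : ℝ) (n : ℕ) (t : ℝ) : ℝ :=
  k₀ / (n * t ^ n) + k₁ * t ^ (β - n) / (n - β)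

variable {k₀ k₁ β t : ℝ}

lemma fluxPotential_one :
    fluxPotential k₀ k₁ β 1 t = k₀ / t - k₁ * t ^ (β - 1) / (β - 1) := by
  rw [fluxPotential, Nat.cast_one, one_mul, pow_one, ← neg_sub β 1, div_neg,
    ← sub_eq_add_neg]

lemma fluxPotential_two :
    fluxPotential k₀ k₁ β 2 t = k₀ / (2 * t ^ 2) + k₁ * t ^ (β - 2) / (2 - β) := by
  rw [fluxPotential, Nat.cast_ofNat]

lemma differentiableAt_powerLawConductivity (ht : t ≠ 0) :
    DifferentiableAt ℝ (powerLawConductivity k₀ k₁ β) t :=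
  ((Real.differentiableAt_rpow_const_of_ne β ht).const_mul k₁).const_add k₀

lemma hasDerivAt_fluxPotential {n : ℕ} (hn : n ≠ 0) (hβ : β ≠ n) (ht : t ≠ 0) :
    HasDerivAt (fluxPotential k₀ k₁ β n) (-powerLawConductivity k₀ k₁ β t / t ^ (n + 1)) t := by
  have hn' : (n : ℝ) ≠ 0 := Nat.cast_ne_zero.mpr hn
  have hβ' : (n : ℝ) - β ≠ 0 := sub_ne_zero.mpr hβ.symm
  have const_term : HasDerivAt (fun s : ℝ => k₀ / (n * s ^ n)) (-k₀ / t ^ (n + 1)) t := by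
    obtain ⟨n, rfl⟩ := Nat.exists_eq_succ_of_ne_zero hn
    convert! (hasDerivAt_const t k₀).fun_div ((hasDerivAt_pow (n + 1) t).const_mul _)
      (mul_ne_zero hn' (pow_ne_zero _ ht)) using 1
    simp only [Nat.succ_eq_add_one, Nat.add_sub_cancel] at hn' ⊢
    field_simp
    ring
  have rpow_term : HasDerivAt (fun s : ℝ => k₁ * s ^ (β - n) / (n - β))
      (-(k₁ * t ^ β) / t ^ (n + 1)) t := by
    convert! ((Real.hasDerivAt_rpow_const (p := β - n) (.inl ht)).const_mul k₁).div_const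
      (n - β) using 1
    rw [sub_sub, ← Nat.cast_succ, Real.rpow_sub_natCast ht]
    field_simp
    ring
  convert! const_term.add rpow_term using 1
  rw [powerLawConductivity]
  ring

lemma eventually_hasDerivAt_fluxPotential {n : ℕ} (hn : n ≠ 0) (hβ : β ≠ n) (ht : t ≠ 0) :
    ∀ᶠ s in 𝓝 t, HasDerivAt (fluxPotential k₀ k₁ β n)
      (-powerLawConductivity k₀ k₁ β s / s ^ (n + 1)) s :=
  (eventually_ne_nhds ht).mono fun _ hs => hasDerivAt_fluxPotential hn hβ hs

end PowerLaw

theorem heat_to_entropy_equation_general {E : Type*} [NormedAddCommGroup E]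
    [InnerProductSpace ℝ E] [FiniteDimensional ℝ E]
    (m lam : ℝ) {k Q Λ G1 G2 : ℝ → ℝ} {Λ' : ℝ} {θ χ : ℝ × E → ℝ} {t : ℝ} {x : E}
    (hθ0 : θ (t, x) ≠ 0) (hθt : DifferentiableAt ℝ (fun s => θ (s, x)) t)
    (hθx : ContDiffAt ℝ 2 (fun y => θ (t, y)) x) (hχx : ContDiffAt ℝ 2 (fun y => χ (t, y)) x)
    (hk : DifferentiableAt ℝ k (θ (t, x)))
    (hΛ : HasDerivAt Λ Λ' (θ (t, x))) (hQ : HasDerivAt Q (θ (t, x) * Λ') (θ (t, x)))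
    (hG1 : ∀ᶠ s in 𝓝 (θ (t, x)), HasDerivAt G1 (-k s / s ^ 2) s)
    (hG2 : ∀ᶠ s in 𝓝 (θ (t, x)), HasDerivAt G2 (-k s / s ^ 3) s) :
    ((1 / θ (t, x)) *
        (deriv (fun s => Q (θ (s, x))) t
          + m * θ (t, x) * lap (fun y => χ (t, y)) x * (χ (t, x) + lam)
          + lap (fun y => G1 (θ (t, y))) x)
      = deriv (fun s => Λ (θ (s, x))) t
        + m * lap (fun y => χ (t, y) ^ 2 / 2 + lam * χ (t, y)) x
        + lap (fun y => G2 (θ (t, y))) x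
        - m * ‖gradient (fun y => χ (t, y)) x‖ ^ 2
        - k (θ (t, x)) * ‖gradient (fun y => (θ (t, y))⁻¹) x‖ ^ 2)
    ∧ (deriv (fun s => Q (θ (s, x))) t
          + m * θ (t, x) * lap (fun y => χ (t, y)) x * (χ (t, x) + lam)
          + lap (fun y => G1 (θ (t, y))) x = 0 ↔
        deriv (fun s => Λ (θ (s, x))) t
            + m * lap (fun y => χ (t, y) ^ 2 / 2 + lam * χ (t, y)) x
            + lap (fun y => G2 (θ (t, y))) x
          = m * ‖gradient (fun y => χ (t, y)) x‖ ^ 2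
            + k (θ (t, x)) * ‖gradient (fun y => (θ (t, y))⁻¹) x‖ ^ 2) := by
  refine (and_iff_left_of_imp fun identity => ?_).mpr ?_
  · rw [← sub_eq_zero (b := _ + _), ← sub_sub, ← identity,
      mul_eq_zero_iff_left (one_div_ne_zero hθ0)]
  · rw [deriv_comp_eq_mul_deriv_comp hθt hΛ hQ, lap_sq_div_two_add_const_mul hχx,
      lap_entropy_potential_comp hθx hθ0 hk hG1 hG2]
    field_simp
    ring

theorem heat_to_entropy_equation {E : Type*} [NormedAddCommGroup E]
    [InnerProductSpace ℝ E] [FiniteDimensional ℝ E]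
    (m lam cV k0 k1 β : ℝ) (hm : 0 < m) (hlam : 0 < lam) (hcV : 0 < cV)
    (hk0 : 0 < k0) (hk1 : 0 < k1)
    (hβ0 : 0 ≤ β) (hβ2 : β < 2) (hβ1 : β ≠ 1)
    (k Q Λ G1 G2 : ℝ → ℝ)
    (hk : ∀ t : ℝ, k t = k0 + k1 * t ^ β)
    (hQ : ∀ t : ℝ, Q t = cV / 2 * t ^ 2)
    (hΛ : ∀ t : ℝ, Λ t = cV * t)
    (hG1 : ∀ t : ℝ, G1 t = k0 / t - k1 * t ^ (β - 1) / (β - 1))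
    (hG2 : ∀ t : ℝ, G2 t = k0 / (2 * t ^ 2) + k1 * t ^ (β - 2) / (2 - β))
    (θ χ : ℝ × E → ℝ) (hθ : ContDiff ℝ 2 θ) (hχ : ContDiff ℝ 2 χ)
    (hpos : ∀ p : ℝ × E, 0 < θ p) :
    (∀ (t : ℝ) (x : E),
      (1 / θ (t, x)) *
        (deriv (fun s => Q (θ (s, x))) t
          + m * θ (t, x) * lap (fun y => χ (t, y)) x * (χ (t, x) + lam)
          + lap (fun y => G1 (θ (t, y))) x)
      = deriv (fun s => Λ (θ (s, x))) t
        + m * lap (fun y => χ (t, y) ^ 2 / 2 + lam * χ (t, y)) x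
        + lap (fun y => G2 (θ (t, y))) x
        - m * ‖gradient (fun y => χ (t, y)) x‖ ^ 2
        - k (θ (t, x)) * ‖gradient (fun y => (θ (t, y))⁻¹) x‖ ^ 2)
    ∧ ((∀ (t : ℝ) (x : E),
          deriv (fun s => Q (θ (s, x))) t
            + m * θ (t, x) * lap (fun y => χ (t, y)) x * (χ (t, x) + lam)
            + lap (fun y => G1 (θ (t, y))) x = 0) →
        (∀ (t : ℝ) (x : E),
          deriv (fun s => Λ (θ (s, x))) t
            + m * lap (fun y => χ (t, y) ^ 2 / 2 + lam * χ (t, y)) x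
            + lap (fun y => G2 (θ (t, y))) x
          = m * ‖gradient (fun y => χ (t, y)) x‖ ^ 2
            + k (θ (t, x)) * ‖gradient (fun y => (θ (t, y))⁻¹) x‖ ^ 2)) := by
  obtain rfl : k = powerLawConductivity k0 k1 β := funext hk
  obtain rfl : Q = fun s => cV / 2 * s ^ 2 := funext hQ
  obtain rfl : Λ = fun s => cV * s := funext hΛ
  obtain rfl : G1 = fluxPotential k0 k1 β 1 := funext fun s => (hG1 s).trans fluxPotential_one.symm
  obtain rfl : G2 = fluxPotential k0 k1 β 2 := funext fun s => (hG2 s).trans fluxPotential_two.symm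
  have hasDerivAt_energy (s : ℝ) : HasDerivAt (fun s => cV / 2 * s ^ 2) (s * cV) s := by
    convert! (hasDerivAt_pow 2 s).const_mul (cV / 2) using 1
    ring
  have pointwise (t : ℝ) (x : E) :=
    have hne : θ (t, x) ≠ 0 := (hpos (t, x)).ne'
    heat_to_entropy_equation_general (k := powerLawConductivity k0 k1 β) m lam hne
      ((hθ.comp (contDiff_prodMk_left x)).differentiable two_ne_zero t)
      (hθ.comp (contDiff_prodMk_right t)).contDiffAt
      (hχ.comp (contDiff_prodMk_right t)).contDiffAt
      (differentiableAt_powerLawConductivity hne)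
      (hasDerivAt_const_mul cV)
      (hasDerivAt_energy (θ (t, x)))
      (eventually_hasDerivAt_fluxPotential one_ne_zero (mod_cast hβ1) hne)
      (eventually_hasDerivAt_fluxPotential two_ne_zero (mod_cast hβ2.ne) hne)
  exact ⟨fun t x => (pointwise t x).1, fun heat t x => (pointwise t x).2.mp (heat t x)⟩
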